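/- Let 2 ≤ k ≤ n and 0 ≤ l ≤ k−2, and define G_l(λ) = −σ_l(λ)/σ_{k−1}(λ) on Γ_{k−1}. Then for every λ ∈ Γ_{k−1} and every ξ ∈ ℝ^n, the second derivatives of G_l satisfy Σ_{p,q=1}^n (∂²G_l/∂λ_p∂λ_q)(λ) ξ_p ξ_q ≤ (1 + 1/(k−l−1)) · G_l(λ)^{−1} · ( Σ_{p=1}^n (∂G_l/∂λ_p)(λ) ξ_p )². -/

import Mathlib

open Finset

/-- The `k`-th elementary symmetric function of `lam : Fin n → ℝ`. -/
noncomputable def esymm (n k : ℕ) (lam : Fin n → ℝ) : ℝ :=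
  ∑ s ∈ Finset.powersetCard k (Finset.univ : Finset (Fin n)), ∏ i ∈ s, lam i

/-- The Gårding cone `Γ_k ⊆ ℝ^n`. -/
def GammaCone (n k : ℕ) : Set (Fin n → ℝ) :=
  {lam | ∀ i : ℕ, 1 ≤ i → i ≤ k → 0 < esymm n i lam}

/-- `G_l(λ) = -σ_l(λ)/σ_{k-1}(λ)`. -/
noncomputable def Gmix (n k l : ℕ) (lam : Fin n → ℝ) : ℝ :=
  -(esymm n l lam / esymm n (k-1) lam)

/-!
Put `m = k - 1` and `p = 1 / (m - l)`. For `φ > 0`, differentiating twice shows that concavity of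
`φ ^ (-p)` gives `D²(-φ)(ξ, ξ) ≤ (1 + p) (-φ)⁻¹ (D(-φ) ξ)²`, so with `φ = σ_l / σ_m` it is enough
that `(σ_m / σ_l) ^ p` is concave on `Γ_m`. This function is the geometric mean of the quotients
`q_j = σ_{j+1} / σ_j` for `l ≤ j < m`. Each `q_j` is positively homogeneous of degree one and
superadditive (Marcus–Lopes), and by AM-GM geometric means inherit superadditivity.
Superadditivity of `q_j` is proved by induction on `j` from
`(j + 2) q_{j+1} = ∑ i, (λ_i - λ_i² / (λ_i + q_j(λ without λ_i)))` and the convexity of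
`(x, s) ↦ x² / s`; Newton's inequality `σ_j σ_{j+2} ≤ σ_{j+1}²` makes the removal of a variable
map `Γ_{j+1}` into `Γ_j`.
-/

/-- The `k`-th elementary symmetric function of the values of `f` on `S`. It is indexed by a finite
set so that a variable can be removed: `esymmOn (S.erase i) k f` is `∂σ_{k+1} / ∂f_i`. -/
def esymmOn {ι R : Type*} [CommSemiring R] (S : Finset ι) (k : ℕ) (f : ι → R) : R :=
  ∑ s ∈ S.powersetCard k, ∏ i ∈ s, f i

section ElementarySymmetric

variable {ι R : Type*} [CommSemiring R]

@[simp] lemma esymmOn_zero (S : Finset ι) (f : ι → R) : esymmOn S 0 f = 1 := by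
  simp [esymmOn]

lemma esymmOn_smul (S : Finset ι) (k : ℕ) (c : R) (f : ι → R) :
    esymmOn S k (c • f) = c ^ k * esymmOn S k f := by
  rw [esymmOn, esymmOn, mul_sum]
  refine sum_congr rfl fun s hs => ?_
  simp only [Pi.smul_apply, smul_eq_mul, prod_mul_distrib, prod_const, (mem_powersetCard.1 hs).2]

open Polynomial in
lemma coeff_prod_one_add_C_mul_X (S : Finset ι) (k : ℕ) (f : ι → R) :
    (∏ i ∈ S, (1 + C (f i) * X)).coeff k = esymmOn S k f := by
  simp_rw [prod_one_add, prod_mul_distrib, prod_const, ← map_prod C, finsetSum_coeff,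
    coeff_C_mul_X_pow, esymmOn, powersetCard_eq_filter, sum_filter, eq_comm (a := k)]

variable [DecidableEq ι]

lemma esymmOn_erase_add {S : Finset ι} {a : ι} (ha : a ∈ S) (k : ℕ) (f : ι → R) :
    esymmOn (S.erase a) (k + 1) f + f a * esymmOn (S.erase a) k f = esymmOn S (k + 1) f := by
  rw [← coeff_prod_one_add_C_mul_X S, ← mul_prod_erase S _ ha, add_mul, one_mul, mul_assoc,
    Polynomial.coeff_add, Polynomial.coeff_C_mul, Polynomial.coeff_X_mul,
    coeff_prod_one_add_C_mul_X, coeff_prod_one_add_C_mul_X]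

open Polynomial in
lemma sum_mul_esymmOn_erase (S : Finset ι) (k : ℕ) (f : ι → R) :
    ∑ i ∈ S, f i * esymmOn (S.erase i) k f = (k + 1) * esymmOn S (k + 1) f := by
  have h := congrArg (fun p : R[X] => p.coeff k)
    (derivative_prod_finset (s := S) (f := fun i => 1 + C (f i) * X))
  simp only [coeff_derivative, coeff_prod_one_add_C_mul_X, finsetSum_coeff, derivative_add,
    derivative_one, zero_add, derivative_C_mul_X, coeff_mul_C] at h
  simpa only [mul_comm] using h.symm

end ElementarySymmetric

section Newton

open Polynomial

lemma splits_derivative_of_splits_real {p : ℝ[X]} (hp : p.Splits) : p.derivative.Splits := by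
  rw [splits_iff_card_roots] at hp ⊢
  have hRolle := card_roots_le_derivative p
  have hroots := p.derivative.card_roots'
  have hdegree := natDegree_derivative_le p
  lia

lemma two_mul_coeff_zero_mul_coeff_two_le_of_splits {p : ℝ[X]} (hp : p.Splits) :
    2 * (p.coeff 0 * p.coeff 2) ≤ p.coeff 1 ^ 2 := by
  obtain ⟨roots, hroots⟩ := splits_iff_exists_multiset.1 hp
  generalize p.leadingCoeff = a at hroots
  subst hroots
  clear hp
  induction roots using Multiset.induction_on with
  | empty => simp [coeff_C]
  | cons c roots ih =>
    rw [Multiset.map_cons, Multiset.prod_cons, mul_left_comm (C a)]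
    generalize C a * (roots.map fun x => X - C x).prod = q at ih ⊢
    have hcoeff_zero : ((X - C c) * q).coeff 0 = -(c * q.coeff 0) := by simp [mul_coeff_zero]
    have hcoeff_succ (k : ℕ) :
        ((X - C c) * q).coeff (k + 1) = q.coeff k - c * q.coeff (k + 1) := by
      rw [sub_mul, coeff_sub, coeff_X_mul, coeff_C_mul]
    rw [hcoeff_zero, hcoeff_succ 0, hcoeff_succ 1]
    linarith [sq_nonneg (q.coeff 0), mul_le_mul_of_nonneg_left ih (sq_nonneg c)]

lemma newton_inequality_of_splits {p : ℝ[X]} (hp : p.Splits) (m : ℕ) :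
    (m + 2) * (p.coeff m * p.coeff (m + 2)) ≤ (m + 1) * p.coeff (m + 1) ^ 2 := by
  induction m generalizing p with
  | zero => simpa using two_mul_coeff_zero_mul_coeff_two_le_of_splits hp
  | succ m ih =>
    have h := ih (splits_derivative_of_splits_real hp)
    simp only [coeff_derivative] at h
    push_cast at h ⊢
    have hm : (0 : ℝ) < (m + 1) * (m + 2) := by positivity
    refine le_of_mul_le_mul_left ?_ hm
    linarith

end Newton

lemma esymmOn_mul_esymmOn_le_sq {ι : Type*} (S : Finset ι) (k : ℕ) (f : ι → ℝ) :
    esymmOn S k f * esymmOn S (k + 2) f ≤ esymmOn S (k + 1) f ^ 2 := by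
  have hsplits : (∏ i ∈ S, (1 + Polynomial.C (f i) * Polynomial.X)).Splits :=
    .prod fun i _ => .of_natDegree_le_one (by compute_degree)
  have h := newton_inequality_of_splits hsplits k
  simp only [coeff_prod_one_add_C_mul_X] at h
  have hk : (0 : ℝ) < k + 2 := by positivity
  refine le_of_mul_le_mul_left (h.trans ?_) hk
  gcongr
  norm_num

/-- The Gårding cone `Γ_m` of the elementary symmetric functions on `S`; the condition at `j = 0`
always holds since `σ_0 = 1`. -/
def gardingCone {ι : Type*} (S : Finset ι) (m : ℕ) : Set (ι → ℝ) :=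
  {f | ∀ j ≤ m, 0 < esymmOn S j f}

/-- The quotient `σ_{k+1} / σ_k` of consecutive elementary symmetric functions on `S`; it is only
meaningful where `σ_k ≠ 0`, in particular on `gardingCone S k`. -/
noncomputable def esymmRatio {ι : Type*} (S : Finset ι) (k : ℕ) (f : ι → ℝ) : ℝ :=
  esymmOn S (k + 1) f / esymmOn S k f

section GardingCone

variable {ι : Type*} {S : Finset ι} {f g : ι → ℝ} {k l m : ℕ}

lemma gardingCone_antitone : Antitone (gardingCone S) :=
  fun _ _ hlm _ hf j hj => hf j (hj.trans hlm)

lemma mem_gardingCone_succ :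
    f ∈ gardingCone S (m + 1) ↔ f ∈ gardingCone S m ∧ 0 < esymmOn S (m + 1) f := by
  simp only [gardingCone, Set.mem_ofPred_eq, Nat.le_succ_iff, or_imp, forall_and, forall_eq]

lemma smul_mem_gardingCone {c : ℝ} (hc : 0 < c) (hf : f ∈ gardingCone S m) :
    c • f ∈ gardingCone S m := fun j hj => by
  rw [esymmOn_smul]
  exact mul_pos (pow_pos hc j) (hf j hj)

lemma isOpen_gardingCone (S : Finset ι) (m : ℕ) : IsOpen (gardingCone S m) := by
  simp only [gardingCone, Set.ofPred_forall]
  refine (Set.finite_Iic m).isOpen_biInter fun j _ => isOpen_lt continuous_const ?_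
  unfold esymmOn
  fun_prop

lemma esymmRatio_pos (hf : f ∈ gardingCone S (k + 1)) : 0 < esymmRatio S k f :=
  div_pos (hf _ le_rfl) (hf _ k.le_succ)

lemma esymmRatio_smul (S : Finset ι) (k : ℕ) {c : ℝ} (hc : c ≠ 0) (f : ι → ℝ) :
    esymmRatio S k (c • f) = c * esymmRatio S k f := by
  rw [esymmRatio, esymmRatio, esymmOn_smul, esymmOn_smul, pow_succ, mul_assoc,
    mul_div_mul_left _ _ (pow_ne_zero k hc), mul_div_assoc]

lemma prod_Ico_esymmRatio (hlm : l ≤ m) (hf : f ∈ gardingCone S m) :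
    ∏ j ∈ Ico l m, esymmRatio S j f = esymmOn S m f / esymmOn S l f := by
  induction m, hlm using Nat.le_induction with
  | base => rw [Ico_self, prod_empty, div_self (hf l le_rfl).ne']
  | succ m hlm ih =>
    have hfm := gardingCone_antitone m.le_succ hf
    rw [prod_Ico_succ_top hlm, ih hfm, esymmRatio, mul_comm,
      div_mul_div_cancel₀ (hfm m le_rfl).ne']

section Erase

variable [DecidableEq ι]

lemma erase_mem_gardingCone (hf : f ∈ gardingCone S (m + 1)) {a : ι} (ha : a ∈ S) :
    f ∈ gardingCone (S.erase a) m := by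
  intro j
  induction j with
  | zero => simp
  | succ j ih =>
    intro hj
    have hprev := ih (by lia)
    have hσ₁ := hf (j + 1) (by lia)
    have hσ₂ := hf (j + 2) (by lia)
    rw [← esymmOn_erase_add ha] at hσ₁ hσ₂
    have hNewton := esymmOn_mul_esymmOn_le_sq (S.erase a) j f
    by_contra! hneg
    linarith [mul_pos hprev hσ₂, mul_nonpos_of_nonpos_of_nonneg hneg hσ₁.le]

lemma esymmOn_succ_div_esymmOn_erase (hf : f ∈ gardingCone S (k + 1)) {a : ι} (ha : a ∈ S) :
    esymmOn S (k + 1) f / esymmOn (S.erase a) k f = f a + esymmRatio (S.erase a) k f := by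
  rw [← esymmOn_erase_add ha, add_div, add_comm,
    mul_div_cancel_right₀ _ (erase_mem_gardingCone hf ha k le_rfl).ne', esymmRatio]

lemma add_esymmRatio_erase_pos (hf : f ∈ gardingCone S (k + 1)) {a : ι} (ha : a ∈ S) :
    0 < f a + esymmRatio (S.erase a) k f := by
  rw [← esymmOn_succ_div_esymmOn_erase hf ha]
  exact div_pos (hf _ le_rfl) (erase_mem_gardingCone hf ha k le_rfl)

lemma mul_esymmRatio_succ (hf : f ∈ gardingCone S (k + 1)) :
    (k + 2) * esymmRatio S (k + 1) f =
      ∑ i ∈ S, (f i - f i ^ 2 / (f i + esymmRatio (S.erase i) k f)) := by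
  have hsum := sum_mul_esymmOn_erase S (k + 1) f
  push_cast at hsum
  rw [esymmRatio, ← mul_div_assoc, show (k : ℝ) + 2 = k + 1 + 1 by ring, ← hsum, sum_div]
  refine sum_congr rfl fun i hi => ?_
  have hσ := (hf _ le_rfl).ne'
  rw [← esymmOn_succ_div_esymmOn_erase hf hi, div_div_eq_mul_div, eq_sub_iff_add_eq, ← add_div,
    div_eq_iff hσ, ← esymmOn_erase_add hi]
  ring

end Erase

lemma add_sq_div_le_of_add_le {x y s t r : ℝ} (hs : 0 < s) (ht : 0 < t) (hr : s + t ≤ r) :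
    (x + y) ^ 2 / r ≤ x ^ 2 / s + y ^ 2 / t := by
  have hSedrakyan := sq_sum_div_le_sum_sq_div univ ![x, y] (g := ![s, t])
    (by simp [Fin.forall_fin_two, hs, ht])
  simp only [Fin.sum_univ_two, Matrix.cons_val_zero, Matrix.cons_val_one] at hSedrakyan
  exact (div_le_div_of_nonneg_left (sq_nonneg _) (by positivity) hr).trans hSedrakyan

lemma esymmRatio_zero_add (S : Finset ι) (f g : ι → ℝ) :
    esymmRatio S 0 (f + g) = esymmRatio S 0 f + esymmRatio S 0 g := by
  simp [esymmRatio, esymmOn, powersetCard_one, sum_add_distrib]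

/- Both halves have to be proved together: the superadditivity of `σ_{k+1} / σ_k` gives the
closure of `Γ_{k+1}`, on which the recursion for `σ_{k+2} / σ_{k+1}` is available. -/
lemma add_mem_gardingCone_and_esymmRatio_add_le (hf : f ∈ gardingCone S k)
    (hg : g ∈ gardingCone S k) :
    f + g ∈ gardingCone S k ∧ esymmRatio S k f + esymmRatio S k g ≤ esymmRatio S k (f + g) := by
  classical
  induction k generalizing S with
  | zero =>
    refine ⟨fun j hj => ?_, (esymmRatio_zero_add S f g).ge⟩
    simp [Nat.le_zero.1 hj]
  | succ k ih =>
    obtain ⟨hmem, hratio⟩ :=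
      ih (gardingCone_antitone k.le_succ hf) (gardingCone_antitone k.le_succ hg)
    have hfg : f + g ∈ gardingCone S (k + 1) := mem_gardingCone_succ.2 ⟨hmem,
      (div_pos_iff_of_pos_right (hmem k le_rfl)).1
        ((add_pos (esymmRatio_pos hf) (esymmRatio_pos hg)).trans_le hratio)⟩
    refine ⟨hfg, ?_⟩
    have hk : (0 : ℝ) < k + 2 := by positivity
    refine le_of_mul_le_mul_left ?_ hk
    rw [mul_add, mul_esymmRatio_succ hf, mul_esymmRatio_succ hg, mul_esymmRatio_succ hfg,
      ← sum_add_distrib]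
    refine sum_le_sum fun i hi => ?_
    have hratio_erase := (ih (erase_mem_gardingCone hf hi) (erase_mem_gardingCone hg hi)).2
    have hsq := add_sq_div_le_of_add_le (x := f i) (y := g i)
      (r := (f + g) i + esymmRatio (S.erase i) k (f + g))
      (add_esymmRatio_erase_pos hf hi) (add_esymmRatio_erase_pos hg hi)
      (by rw [Pi.add_apply]; linarith)
    rw [Pi.add_apply] at hsq ⊢
    linarith

lemma add_mem_gardingCone (hf : f ∈ gardingCone S m) (hg : g ∈ gardingCone S m) :
    f + g ∈ gardingCone S m :=
  (add_mem_gardingCone_and_esymmRatio_add_le hf hg).1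

lemma esymmRatio_add_le (hf : f ∈ gardingCone S k) (hg : g ∈ gardingCone S k) :
    esymmRatio S k f + esymmRatio S k g ≤ esymmRatio S k (f + g) :=
  (add_mem_gardingCone_and_esymmRatio_add_le hf hg).2

end GardingCone

section Concavity

lemma prod_rpow_add_prod_rpow_le {ι : Type*} {s : Finset ι} {w x y : ι → ℝ}
    (hw : ∀ i ∈ s, 0 ≤ w i) (hw_sum : ∑ i ∈ s, w i = 1) (hx : ∀ i ∈ s, 0 < x i)
    (hy : ∀ i ∈ s, 0 < y i) :
    ∏ i ∈ s, x i ^ w i + ∏ i ∈ s, y i ^ w i ≤ ∏ i ∈ s, (x i + y i) ^ w i := by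
  have hxy : ∀ i ∈ s, 0 < x i + y i := fun i hi => add_pos (hx i hi) (hy i hi)
  have hAMGM {z : ι → ℝ} (hz : ∀ i ∈ s, 0 < z i) :
      (∏ i ∈ s, z i ^ w i) / ∏ i ∈ s, (x i + y i) ^ w i ≤ ∑ i ∈ s, w i * (z i / (x i + y i)) := by
    rw [← prod_div_distrib, ← prod_congr rfl fun i hi =>
      Real.div_rpow (hz i hi).le (hxy i hi).le (w i)]
    exact Real.geom_mean_le_arith_mean_weighted s w _ hw hw_sum
      fun i hi => (div_pos (hz i hi) (hxy i hi)).le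
  rw [← div_le_one (prod_pos fun i hi => Real.rpow_pos_of_pos (hxy i hi) _), add_div]
  calc _ ≤ ∑ i ∈ s, w i * (x i / (x i + y i)) + ∑ i ∈ s, w i * (y i / (x i + y i)) :=
        add_le_add (hAMGM hx) (hAMGM hy)
    _ = ∑ i ∈ s, w i := by
        rw [← sum_add_distrib]
        refine sum_congr rfl fun i hi => ?_
        rw [← mul_add, ← add_div, div_self (hxy i hi).ne', mul_one]
    _ = 1 := hw_sum

lemma concaveOn_of_superadditive {E : Type*} [AddCommGroup E] [Module ℝ E] (C : ConvexCone ℝ E)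
    {φ : E → ℝ} (hsmul : ∀ c > 0, ∀ x ∈ C, φ (c • x) = c * φ x)
    (hadd : ∀ x ∈ C, ∀ y ∈ C, φ x + φ y ≤ φ (x + y)) : ConcaveOn ℝ C φ := by
  refine concaveOn_iff_forall_pos.2 ⟨C.convex, fun x hx y hy a b ha hb _ => ?_⟩
  calc a • φ x + b • φ y = φ (a • x) + φ (b • y) := by
        rw [hsmul a ha x hx, hsmul b hb y hy, smul_eq_mul, smul_eq_mul]
    _ ≤ φ (a • x + b • y) := hadd _ (C.smul_mem ha hx) _ (C.smul_mem hb hy)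

lemma esymmOn_div_rpow_eq_prod {ι : Type*} {S : Finset ι} {l m : ℕ} (hlm : l ≤ m) {f : ι → ℝ}
    (hf : f ∈ gardingCone S m) (p : ℝ) :
    (esymmOn S m f / esymmOn S l f) ^ p = ∏ j ∈ Ico l m, esymmRatio S j f ^ p := by
  rw [← prod_Ico_esymmRatio hlm hf, Real.finsetProd_rpow]
  exact fun j hj => (esymmRatio_pos (gardingCone_antitone (mem_Ico.1 hj).2 hf)).le

theorem concaveOn_esymmOn_div_rpow {ι : Type*} (S : Finset ι) {l m : ℕ} (hlm : l < m) :
    ConcaveOn ℝ (gardingCone S m)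
      fun f => (esymmOn S m f / esymmOn S l f) ^ (1 / ((m : ℝ) - l)) := by
  have hd : (0 : ℝ) < (m : ℝ) - l := sub_pos.2 (by exact_mod_cast hlm)
  have hweights : ∑ _j ∈ Ico l m, 1 / ((m : ℝ) - l) = 1 := by
    rw [sum_const, Nat.card_Ico, nsmul_eq_mul, Nat.cast_sub hlm.le, mul_one_div_cancel hd.ne']
  have hpos {f : ι → ℝ} (hf : f ∈ gardingCone S m) : ∀ j ∈ Ico l m, 0 < esymmRatio S j f :=
    fun j hj => esymmRatio_pos (gardingCone_antitone (mem_Ico.1 hj).2 hf)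
  refine concaveOn_of_superadditive ⟨gardingCone S m, fun c hc f hf => smul_mem_gardingCone hc hf,
    fun f hf g hg => add_mem_gardingCone hf hg⟩ (fun c hc f hf => ?_) fun f hf g hg => ?_
  · rw [esymmOn_div_rpow_eq_prod hlm.le (smul_mem_gardingCone hc hf),
      esymmOn_div_rpow_eq_prod hlm.le hf]
    calc ∏ j ∈ Ico l m, esymmRatio S j (c • f) ^ (1 / ((m : ℝ) - l))
        = (∏ _j ∈ Ico l m, c ^ (1 / ((m : ℝ) - l))) *
            ∏ j ∈ Ico l m, esymmRatio S j f ^ (1 / ((m : ℝ) - l)) := by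
          rw [← prod_mul_distrib]
          refine prod_congr rfl fun j hj => ?_
          rw [esymmRatio_smul S j hc.ne', Real.mul_rpow hc.le (hpos hf j hj).le]
      _ = _ := by rw [← Real.rpow_sum_of_pos hc, hweights, Real.rpow_one]
  · rw [esymmOn_div_rpow_eq_prod hlm.le hf, esymmOn_div_rpow_eq_prod hlm.le hg,
      esymmOn_div_rpow_eq_prod hlm.le (add_mem_gardingCone hf hg)]
    refine (prod_rpow_add_prod_rpow_le (fun _ _ => by positivity) hweights (hpos hf)
      (hpos hg)).trans (prod_le_prod (fun j hj => ?_) fun j hj => ?_)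
    · exact Real.rpow_nonneg (add_pos (hpos hf j hj) (hpos hg j hj)).le _
    · have hmono := gardingCone_antitone (S := S) (mem_Ico.1 hj).2.le
      exact Real.rpow_le_rpow (add_pos (hpos hf j hj) (hpos hg j hj)).le
        (esymmRatio_add_le (hmono hf) (hmono hg)) (by positivity)

end Concavity

section SecondDerivative

open Topology

variable {E : Type*} [NormedAddCommGroup E] [NormedSpace ℝ E] {f : E → ℝ} {x : E}

lemma differentiableAt_fderiv_of_contDiffAt (hf : ContDiffAt ℝ 2 f x) :
    DifferentiableAt ℝ (fderiv ℝ f) x :=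
  (hf.fderiv_right (m := 1) le_rfl).differentiableAt one_ne_zero

lemma fderiv_fderiv_nonpos_of_concaveOn {s : Set E} (hs : s ∈ 𝓝 x) (hconc : ConcaveOn ℝ s f)
    (hf : ContDiffAt ℝ 2 f x) (v : E) : fderiv ℝ (fderiv ℝ f) x v v ≤ 0 := by
  let line : ℝ →ᵃ[ℝ] E := AffineMap.lineMap x (x + v)
  have hline (t : ℝ) : HasDerivAt line v t := by
    simpa [line] using AffineMap.hasDerivAt_lineMap (a := x) (b := x + v) (x := t)
  have hline_zero : line 0 = x := AffineMap.lineMap_apply_zero x (x + v)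
  have hnhds : ∀ᶠ t in 𝓝 (0 : ℝ), line t ∈ s ∧ DifferentiableAt ℝ f (line t) := by
    have hdiff : ∀ᶠ y in 𝓝 x, DifferentiableAt ℝ f y :=
      (hf.eventually (by simp)).mono fun y hy => hy.differentiableAt two_ne_zero
    have htendsto : Filter.Tendsto line (𝓝 0) (𝓝 x) := by
      simpa only [hline_zero] using (hline 0).continuousAt.tendsto
    exact htendsto.eventually (Filter.Eventually.and hs hdiff)
  obtain ⟨ε, hε, hball⟩ := Metric.eventually_nhds_iff_ball.1 hnhds
  have hderiv {t : ℝ} (ht : t ∈ Metric.ball 0 ε) :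
      HasDerivAt (f ∘ line) (fderiv ℝ f (line t) v) t :=
    (hball t ht).2.hasFDerivAt.comp_hasDerivAt t (hline t)
  have hanti : AntitoneOn (fun t => fderiv ℝ f (line t) v) (Metric.ball 0 ε) :=
    (((hconc.comp_affineMap line).subset (fun t ht => (hball t ht).1)
      (convex_ball 0 ε)).antitoneOn_deriv fun t ht => (hderiv ht).differentiableAt).congr
      fun t ht => (hderiv ht).deriv
  have hderiv₂ : HasDerivAt (fun t => fderiv ℝ f (line t) v) (fderiv ℝ (fderiv ℝ f) x v v) 0 := by
    rw [← hline_zero] at hf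
    simpa [hline_zero] using ((differentiableAt_fderiv_of_contDiffAt hf).hasFDerivAt.comp_hasDerivAt
      0 (hline 0)).clm_apply (hasDerivAt_const 0 v)
  rw [← hderiv₂.deriv, ← derivWithin_of_mem_nhds (Metric.ball_mem_nhds 0 hε)]
  exact hanti.derivWithin_nonpos

lemma fderiv_fderiv_rpow_const (hf : ContDiffAt ℝ 2 f x) (hpos : 0 < f x) (p : ℝ) (v : E) :
    fderiv ℝ (fderiv ℝ fun y => f y ^ p) x v v =
      p * f x ^ (p - 1) *
        (fderiv ℝ (fderiv ℝ f) x v v + (p - 1) * (f x)⁻¹ * fderiv ℝ f x v ^ 2) := by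
  have hfderiv : fderiv ℝ (fun y => f y ^ p) =ᶠ[𝓝 x]
      fun y => (p * f y ^ (p - 1)) • fderiv ℝ f y := by
    filter_upwards [hf.eventually (by simp), hf.continuousAt.eventually_const_lt hpos] with y hy hfy
    exact ((hy.differentiableAt two_ne_zero).hasFDerivAt.rpow_const (.inl hfy.ne')).fderiv
  have hf' := (hf.differentiableAt two_ne_zero).hasFDerivAt
  have hcoeff := (hf'.rpow_const (p := p - 1) (.inl hpos.ne')).const_mul p
  rw [hfderiv.fderiv_eq,
    (hcoeff.fun_smul (differentiableAt_fderiv_of_contDiffAt hf).hasFDerivAt).fderiv]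
  simp only [add_apply, smul_apply, ContinuousLinearMap.smulRight_apply, smul_eq_mul,
    Real.rpow_sub_one hpos.ne' (p - 1)]
  ring

lemma fderiv_fderiv_le_of_concaveOn_neg_rpow_neg {s : Set E} {p : ℝ} (hs : s ∈ 𝓝 x) (hp : 0 < p)
    (hf : ContDiffAt ℝ 2 f x) (hneg : f x < 0) (hconc : ConcaveOn ℝ s fun y => (-f y) ^ (-p))
    (v : E) :
    fderiv ℝ (fderiv ℝ f) x v v ≤ (1 + p) * (f x)⁻¹ * fderiv ℝ f x v ^ 2 := by
  have hpos : 0 < -f x := neg_pos.2 hneg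
  have hnonpos :=
    fderiv_fderiv_nonpos_of_concaveOn hs hconc (hf.neg.rpow_const_of_ne hpos.ne') v
  have hfderiv : (fderiv ℝ fun y => -f y) = fun y => -fderiv ℝ f y := funext fun _ => fderiv_fun_neg
  rw [fderiv_fderiv_rpow_const hf.neg hpos, hfderiv, fderiv_fun_neg] at hnonpos
  simp only [neg_apply, neg_sq, inv_neg] at hnonpos
  have hcoeff : -p * (-f x) ^ (-p - 1) < 0 :=
    mul_neg_of_neg_of_pos (neg_neg_of_pos hp) (Real.rpow_pos_of_pos hpos _)
  linarith [nonneg_of_mul_nonpos_right hnonpos hcoeff]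

end SecondDerivative

section Coordinates

variable {ι : Type*} [Fintype ι] [DecidableEq ι]

lemma sum_apply_single_mul (L : (ι → ℝ) →L[ℝ] ℝ) (ξ : ι → ℝ) :
    ∑ p, L (Pi.single p 1) * ξ p = L ξ := by
  conv_rhs => rw [pi_eq_sum_univ' ξ, map_sum]
  simp [mul_comm]

lemma sum_sum_fderiv_fderiv_single_mul {F : (ι → ℝ) → ℝ} {x : ι → ℝ}
    (hF : DifferentiableAt ℝ (fderiv ℝ F) x) (ξ : ι → ℝ) :
    ∑ p, ∑ q, fderiv ℝ (fun y => fderiv ℝ F y (Pi.single p 1)) x (Pi.single q 1) * ξ p * ξ q =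
      fderiv ℝ (fderiv ℝ F) x ξ ξ := by
  have hpartial (p : ι) : fderiv ℝ (fun y => fderiv ℝ F y (Pi.single p 1)) x ξ =
      fderiv ℝ (fderiv ℝ F) x ξ (Pi.single p 1) := by
    simp [fderiv_clm_apply hF (differentiableAt_const _)]
  rw [← sum_apply_single_mul (fderiv ℝ (fderiv ℝ F) x ξ)]
  refine sum_congr rfl fun p _ => ?_
  rw [← hpartial, ← sum_apply_single_mul, sum_mul]
  exact sum_congr rfl fun q _ => mul_right_comm _ _ _

end Coordinates

lemma contDiffAt_esymmOn_div {ι : Type*} [Fintype ι] {S : Finset ι} {k l : ℕ} {x : ι → ℝ}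
    {r : WithTop ℕ∞} (hx : esymmOn S l x ≠ 0) :
    ContDiffAt ℝ r (fun y => esymmOn S k y / esymmOn S l y) x := by
  unfold esymmOn at hx ⊢
  fun_prop (disch := exact hx)

theorem Gmix_second_deriv_estimate_general {ι : Type*} [Fintype ι] [DecidableEq ι] (S : Finset ι)
    {l m : ℕ} (hlm : l < m) {x : ι → ℝ} (hx : x ∈ gardingCone S m) (ξ : ι → ℝ) :
    ∑ p, ∑ q,
        fderiv ℝ (fun y => fderiv ℝ (fun z => -(esymmOn S l z / esymmOn S m z)) y (Pi.single p 1)) x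
            (Pi.single q 1) * ξ p * ξ q
      ≤ (1 + 1 / ((m : ℝ) - l)) * (-(esymmOn S l x / esymmOn S m x))⁻¹ *
          (∑ p, fderiv ℝ (fun z => -(esymmOn S l z / esymmOn S m z)) x (Pi.single p 1) * ξ p) ^ 2
        := by
  have hσl := hx l hlm.le
  have hσm := hx m le_rfl
  have hF : ContDiffAt ℝ 2 (fun z => -(esymmOn S l z / esymmOn S m z)) x :=
    (contDiffAt_esymmOn_div hσm.ne').neg
  have hconc : ConcaveOn ℝ (gardingCone S m)
      fun y => (-(-(esymmOn S l y / esymmOn S m y))) ^ (-(1 / ((m : ℝ) - l))) := by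
    simpa only [neg_neg, Real.rpow_neg_eq_inv_rpow, inv_div] using concaveOn_esymmOn_div_rpow S hlm
  rw [sum_sum_fderiv_fderiv_single_mul (differentiableAt_fderiv_of_contDiffAt hF),
    sum_apply_single_mul]
  have hp : 0 < 1 / ((m : ℝ) - l) := one_div_pos.2 (sub_pos.2 (by exact_mod_cast hlm))
  exact fderiv_fderiv_le_of_concaveOn_neg_rpow_neg ((isOpen_gardingCone S m).mem_nhds hx) hp hF
    (neg_neg_of_pos (div_pos hσl hσm)) hconc ξ

lemma GammaCone_eq_gardingCone (n k : ℕ) : GammaCone n k = gardingCone univ k := by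
  ext lam
  refine ⟨fun h j hj => ?_, fun h j _ hj => h j hj⟩
  rcases j.eq_zero_or_pos with rfl | hj₀
  · simp
  · exact h j hj₀ hj

/-- Second-derivative estimate for `G_l = -σ_l/σ_{k-1}`:
`∑_{p,q} (∂²G_l/∂λ_p∂λ_q) ξ_p ξ_q ≤ (1 + 1/(k-l-1)) G_l⁻¹ (∑_p (∂G_l/∂λ_p) ξ_p)²`. -/
theorem Gmix_second_deriv_estimate (n k l : ℕ) (hk2 : 2 ≤ k) (hkn : k ≤ n)
    (hl : l ≤ k - 2) (lam : Fin n → ℝ) (hlam : lam ∈ GammaCone n (k-1))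
    (ξ : Fin n → ℝ) :
    ∑ p : Fin n, ∑ q : Fin n,
        fderiv ℝ (fun x => fderiv ℝ (Gmix n k l) x (Pi.single p 1)) lam
            (Pi.single q 1) * ξ p * ξ q
      ≤ (1 + 1 / ((k : ℝ) - (l : ℝ) - 1)) * (Gmix n k l lam)⁻¹ *
          (∑ p : Fin n, fderiv ℝ (Gmix n k l) lam (Pi.single p 1) * ξ p) ^ 2 := by
  have hcast : (k : ℝ) - l - 1 = (k - 1 : ℕ) - l := by rw [Nat.cast_pred (by lia)]; ring
  rw [hcast]
  exact Gmix_second_deriv_estimate_general univ (by lia) (GammaCone_eq_gardingCone n _ ▸ hlam) ξ
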